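/- arXiv:2104.03482 — 2 statements merged into one kernel-verified Lean document; each statement's English description precedes it below -/
import Mathlib

section
/- Let G be a finite simple connected graph. Then (i) for every vertex v ∈ V(G), d₂(v|T(G)) ≥ 2·d₂(v|G), and equality holds for all v ∈ V(G) if and only if G is {C₃,C₄}-free; and (ii) for every edge e ∈ E(G) (viewed as the corresponding new vertex of T(G) and as a vertex of L(G)), d₂(e|T(G)) ≤ d₁(e|L(G)) + d₂(e|L(G)), and equality holds for all e ∈ E(G) if and only if G is C₃-free. -/
/-!
The vertices at distance two in `T(G)` are determined locally. From an original vertex `v` one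
reaches the vertices at distance two in `G`, and the edges avoiding `v` that contain a neighbour
of `v` (`edgesNear G v`). From an edge `e` one reaches the edges at distance two in `L(G)`, and the
vertices off `e` that are adjacent to an endpoint of `e` (`vertsNear G e`). After cancelling the
common summands, both parts compare the cardinalities of two finite sets linked by incidence:

* every `w` at distance two from `v` lies on some edge of `edgesNear G v`, and no edge of
  `edgesNear G v` contains two such `w`. Hence there are at least as many edges as vertices `w`,
  with equality iff every edge of `edgesNear G v` contains such a `w` (no triangle at `v`) and
  each `w` lies on only one such edge (no 4-cycle through `v` and `w`);
* every vertex of `vertsNear G e` lies on some edge adjacent to `e`, and every edge adjacent to `e`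
  contains exactly one vertex of `vertsNear G e`. Equality holds iff each such vertex lies on only
  one such edge, that is, iff `e` is in no triangle.

The counting principle is `card_le_and_eq_iff`; the forbidden subgraphs are unfolded to explicit
vertices in `fFree_three_iff` and `fFree_four_iff`.
-/

/-!
Definitions for the leap eccentric connectivity index of graph operations with
subdivided edges (Song–Tang).
-/

open SimpleGraph Finset
open scoped Classical

noncomputable section

instance edgeSetFintypeOfFintype {V : Type*} [Fintype V] (G : SimpleGraph V) :
    Fintype G.edgeSet :=
  Set.Finite.fintype (Set.toFinite _)

/-- Eccentricity `e(v|X)` of a vertex: the maximum distance from `v` to a vertex of `X`. -/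
def ecc {V : Type*} [Fintype V] (X : SimpleGraph V) (v : V) : ℕ :=
  Finset.univ.sup (fun u => X.dist v u)

/-- `d₁(v|X)`: the degree of `v`. -/
def deg1 {V : Type*} [Fintype V] (X : SimpleGraph V) (v : V) : ℕ :=
  (Finset.univ.filter (fun u => X.Adj v u)).card

/-- `d₂(v|X)`: the second degree of `v`, the number of vertices at distance exactly 2. -/
def deg2 {V : Type*} [Fintype V] (X : SimpleGraph V) (v : V) : ℕ :=
  (Finset.univ.filter (fun u => X.dist v u = 2)).card

/-- The leap eccentric connectivity index `Lξᶜ(X) = Σ_v d₂(v|X)·e(v|X)`. -/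
def leapECI {V : Type*} [Fintype V] (X : SimpleGraph V) : ℕ :=
  ∑ v, deg2 X v * ecc X v

/-- The eccentric connectivity index `ξᶜ(X) = Σ_v d₁(v|X)·e(v|X)`. -/
def eci {V : Type*} [Fintype V] (X : SimpleGraph V) : ℕ :=
  ∑ v, deg1 X v * ecc X v

/-- The first Zagreb index `M₁(X) = Σ_v d₁(v|X)²`. -/
def zagrebM1 {V : Type*} [Fintype V] (X : SimpleGraph V) : ℕ :=
  ∑ v, (deg1 X v) ^ 2

/-- The total eccentricity `θ(X) = Σ_v e(v|X)`. -/
def totalEcc {V : Type*} [Fintype V] (X : SimpleGraph V) : ℕ :=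
  ∑ v, ecc X v

/-- The number of edges `|E(X)|`. -/
def numEdges {V : Type*} (X : SimpleGraph V) : ℕ := X.edgeSet.ncard

/-- The line graph `L(G)`, with vertex set `E(G)`: two edges of `G` are adjacent in
`L(G)` iff they are distinct and share an endpoint. -/
def lineG {V : Type*} (G : SimpleGraph V) : SimpleGraph G.edgeSet :=
  SimpleGraph.fromRel (fun e f => ∃ v, v ∈ (e : Sym2 V) ∧ v ∈ (f : Sym2 V))

/-- The subdivision graph `S(G)`, with vertex set `V(G) ⊕ E(G)`:
`v ∈ V(G)` is adjacent to `e ∈ E(G)` iff `v` is an endpoint of `e`; no other edges. -/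
def subdivG {V : Type*} (G : SimpleGraph V) : SimpleGraph (V ⊕ G.edgeSet) :=
  SimpleGraph.fromRel (fun a b => match a, b with
    | Sum.inl v, Sum.inr e => v ∈ (e : Sym2 V)
    | _, _ => False)

/-- The graph `Q(G)`, with vertex set `V(G) ⊕ E(G)`: `v ∈ V(G)` is adjacent to
`e ∈ E(G)` iff `v` is an endpoint of `e`, and distinct `e, e' ∈ E(G)` are adjacent
iff the corresponding edges share an endpoint in `G`. -/
def qGraph {V : Type*} (G : SimpleGraph V) : SimpleGraph (V ⊕ G.edgeSet) :=
  SimpleGraph.fromRel (fun a b => match a, b with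
    | Sum.inl v, Sum.inr e => v ∈ (e : Sym2 V)
    | Sum.inr e, Sum.inr f => ∃ v, v ∈ (e : Sym2 V) ∧ v ∈ (f : Sym2 V)
    | _, _ => False)

/-- The graph `R(G)`, with vertex set `V(G) ⊕ E(G)`: `v, v' ∈ V(G)` are adjacent iff
they are adjacent in `G`, and `v ∈ V(G)` is adjacent to `e ∈ E(G)` iff `v` is an
endpoint of `e`. -/
def rGraph {V : Type*} (G : SimpleGraph V) : SimpleGraph (V ⊕ G.edgeSet) :=
  SimpleGraph.fromRel (fun a b => match a, b with
    | Sum.inl v, Sum.inl w => G.Adj v w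
    | Sum.inl v, Sum.inr e => v ∈ (e : Sym2 V)
    | _, _ => False)

/-- The total graph `T(G)`, with vertex set `V(G) ⊕ E(G)`: adjacency holds iff the
corresponding elements of `G` are adjacent or incident. -/
def tGraph {V : Type*} (G : SimpleGraph V) : SimpleGraph (V ⊕ G.edgeSet) :=
  SimpleGraph.fromRel (fun a b => match a, b with
    | Sum.inl v, Sum.inl w => G.Adj v w
    | Sum.inl v, Sum.inr e => v ∈ (e : Sym2 V)
    | Sum.inr e, Sum.inr f => ∃ v, v ∈ (e : Sym2 V) ∧ v ∈ (f : Sym2 V)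
    | _, _ => False)

/-- `G` is `F`-free: no induced subgraph of `G` is isomorphic to `F`. -/
def fFree {W V : Type*} (F : SimpleGraph W) (G : SimpleGraph V) : Prop :=
  ∀ s : Set V, IsEmpty (F ≃g G.induce s)

/-- The subdivision vertex join `G ∨̇ H`: the disjoint union of `S(G)` and `H`,
joining every original vertex of `G` to every vertex of `H`. -/
def svJoin {V W : Type*} (G : SimpleGraph V) (H : SimpleGraph W) :
    SimpleGraph ((V ⊕ G.edgeSet) ⊕ W) :=
  SimpleGraph.fromRel (fun a b => match a, b with
    | Sum.inl x, Sum.inl y => (subdivG G).Adj x y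
    | Sum.inl (Sum.inl _), Sum.inr _ => True
    | Sum.inr w, Sum.inr w' => H.Adj w w'
    | _, _ => False)

/-- The subdivision edge join `G ⊻ H`: the disjoint union of `S(G)` and `H`,
joining every subdivision vertex to every vertex of `H`. -/
def seJoin {V W : Type*} (G : SimpleGraph V) (H : SimpleGraph W) :
    SimpleGraph ((V ⊕ G.edgeSet) ⊕ W) :=
  SimpleGraph.fromRel (fun a b => match a, b with
    | Sum.inl x, Sum.inl y => (subdivG G).Adj x y
    | Sum.inl (Sum.inr _), Sum.inr _ => True
    | Sum.inr w, Sum.inr w' => H.Adj w w'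
    | _, _ => False)

/-- The subdivision vertex edge join `G^S △ (H₁^V ∨ H₂^S)`: the disjoint union of
`S(G)`, `H₁` and `H₂`, joining every original vertex of `G` to every vertex of `H₁`
and every subdivision vertex to every vertex of `H₂`. -/
def sveJoin {V W₁ W₂ : Type*} (G : SimpleGraph V) (H₁ : SimpleGraph W₁)
    (H₂ : SimpleGraph W₂) : SimpleGraph ((V ⊕ G.edgeSet) ⊕ (W₁ ⊕ W₂)) :=
  SimpleGraph.fromRel (fun a b => match a, b with
    | Sum.inl x, Sum.inl y => (subdivG G).Adj x y
    | Sum.inl (Sum.inl _), Sum.inr (Sum.inl _) => True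
    | Sum.inl (Sum.inr _), Sum.inr (Sum.inr _) => True
    | Sum.inr (Sum.inl w), Sum.inr (Sum.inl w') => H₁.Adj w w'
    | Sum.inr (Sum.inr w), Sum.inr (Sum.inr w') => H₂.Adj w w'
    | _, _ => False)

/-- The double corona of a base graph `B` on `A ⊕ E'` with the graphs `H₁, H₂`:
one copy of `H₁` for each `A`-vertex, joined to it, and one copy of `H₂` for each
`E'`-vertex, joined to it. -/
def doubleCorona {A E' W₁ W₂ : Type*} (B : SimpleGraph (A ⊕ E')) (H₁ : SimpleGraph W₁)
    (H₂ : SimpleGraph W₂) : SimpleGraph ((A ⊕ E') ⊕ (A × W₁ ⊕ E' × W₂)) :=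
  SimpleGraph.fromRel (fun a b => match a, b with
    | Sum.inl x, Sum.inl y => B.Adj x y
    | Sum.inl (Sum.inl v), Sum.inr (Sum.inl p) => v = p.1
    | Sum.inl (Sum.inr e), Sum.inr (Sum.inr p) => e = p.1
    | Sum.inr (Sum.inl p), Sum.inr (Sum.inl q) => p.1 = q.1 ∧ H₁.Adj p.2 q.2
    | Sum.inr (Sum.inr p), Sum.inr (Sum.inr q) => p.1 = q.1 ∧ H₂.Adj p.2 q.2
    | _, _ => False)

/-- If every element of `D` is related to an element of `A` and no element of `A` is related to
two elements of `D`, then `D` is at most as large as `A`, with equality exactly when the relation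
is the graph of a bijection. -/
lemma card_le_and_eq_iff {α β : Type*} (D : Finset α) (A : Finset β) (R : α → β → Prop)
    (h1 : ∀ a ∈ D, ∃ b ∈ A, R a b)
    (h2 : ∀ b ∈ A, ∀ a ∈ D, ∀ a' ∈ D, R a b → R a' b → a = a') :
    D.card ≤ A.card ∧ (A.card = D.card ↔
      (∀ b ∈ A, ∃ a ∈ D, R a b) ∧ ∀ a ∈ D, ∀ b ∈ A, ∀ b' ∈ A, R a b → R a b' → b = b') := by
  rcases isEmpty_or_nonempty β with hβ | hβ
  · have hD : D = ∅ := Finset.eq_empty_of_forall_notMem fun a ha => by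
      obtain ⟨b, -⟩ := h1 a ha
      exact hβ.false b
    simp [hD, Finset.eq_empty_of_isEmpty A]
  choose! f hfA hfR using h1
  have hinj : Set.InjOn f D := fun a ha a' ha' h =>
    h2 (f a) (hfA a ha) a ha a' ha' (hfR a ha) (h ▸ hfR a' ha')
  have hsub : D.image f ⊆ A := by
    intro b hb
    obtain ⟨a, ha, rfl⟩ := Finset.mem_image.1 hb
    exact hfA a ha
  have hcard : (D.image f).card = D.card := Finset.card_image_of_injOn hinj
  refine ⟨hcard ▸ Finset.card_le_card hsub, fun h => ?_, fun ⟨hs, hu⟩ => ?_⟩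
  · have himg : D.image f = A := Finset.eq_of_subset_of_card_le hsub (by omega)
    have hsurj : ∀ b ∈ A, ∃ a ∈ D, f a = b := fun b hb => Finset.mem_image.1 (himg ▸ hb)
    have key : ∀ a ∈ D, ∀ b ∈ A, R a b → b = f a := by
      intro a ha b hb hR
      obtain ⟨a', ha', rfl⟩ := hsurj b hb
      rw [h2 _ hb a ha a' ha' hR (hfR a' ha')]
    refine ⟨fun b hb => ?_, fun a ha b hb b' hb' hR hR' => ?_⟩
    · obtain ⟨a, ha, rfl⟩ := hsurj b hb
      exact ⟨a, ha, hfR a ha⟩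
    · rw [key a ha b hb hR, key a ha b' hb' hR']
  · have himg : D.image f = A := by
      refine Finset.Subset.antisymm hsub fun b hb => ?_
      obtain ⟨a, ha, hR⟩ := hs b hb
      exact Finset.mem_image.2 ⟨a, ha, hu a ha _ (hfA a ha) b hb (hfR a ha) hR⟩
    rw [← hcard, himg]

lemma dist_eq_two_iff_exists {V : Type*} (X : SimpleGraph V) (u v : V) :
    X.dist u v = 2 ↔ u ≠ v ∧ ¬ X.Adj u v ∧ ∃ w, X.Adj u w ∧ X.Adj w v := by
  constructor
  · intro h
    refine ⟨?_, ?_, ?_⟩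
    · rintro rfl
      simp at h
    · intro ha
      rw [← dist_eq_one_iff_adj] at ha
      omega
    · obtain ⟨p, hp⟩ := exists_walk_of_dist_ne_zero (G := X) (u := u) (v := v) (by omega)
      rw [h] at hp
      match p, hp with
      | .cons h1 (.cons h2 .nil), _ => exact ⟨_, h1, h2⟩
  · rintro ⟨hne, hna, w, h1, h2⟩
    have hr : X.Reachable u v := h1.reachable.trans h2.reachable
    have := hr.one_lt_dist_of_ne_of_not_adj hne hna
    have := X.dist_le (.cons h1 (.cons h2 .nil))
    simp only [Walk.length_cons, Walk.length_nil] at this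
    omega

/-! ### Forbidden cycles -/

lemma fFree_iff_isEmpty_embedding {W V : Type*} (F : SimpleGraph W) (G : SimpleGraph V) :
    fFree F G ↔ IsEmpty (F ↪g G) :=
  ⟨fun h => ⟨fun f => (h (Set.range f)).false f.isoInduceRange⟩,
    fun h s => ⟨fun φ => h.false ((Embedding.induce s).comp φ.toEmbedding)⟩⟩

lemma fFree_three_iff {V : Type*} (G : SimpleGraph V) :
    fFree (cycleGraph 3) G ↔ ∀ a b c, G.Adj a b → G.Adj b c → G.Adj a c → False := by
  rw [fFree_iff_isEmpty_embedding, cycleGraph_three_eq_top]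
  constructor
  · intro h a b c hab hbc hac
    refine h.false ⟨⟨![a, b, c], ?_⟩, ?_⟩
    · intro i j hij
      have := hab.ne; have := hbc.ne; have := hac.ne
      fin_cases i <;> fin_cases j <;> simp_all
    · intro i j
      change G.Adj (![a, b, c] i) (![a, b, c] j) ↔ _
      have := hab.symm; have := hbc.symm; have := hac.symm
      fin_cases i <;> fin_cases j <;> simp_all
  · refine fun h => ⟨fun f => h (f 0) (f 1) (f 2) ?_ ?_ ?_⟩ <;> simp [f.map_adj_iff]

lemma fFree_four_iff {V : Type*} (G : SimpleGraph V) :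
    fFree (cycleGraph 4) G ↔ ∀ a b c d, G.Adj a b → G.Adj b c → G.Adj c d → G.Adj d a →
      a ≠ c → b ≠ d → ¬ G.Adj a c → ¬ G.Adj b d → False := by
  rw [fFree_iff_isEmpty_embedding]
  constructor
  · intro h a b c d hab hbc hcd hda hac hbd nac nbd
    refine h.false ⟨⟨![a, b, c, d], ?_⟩, ?_⟩
    · intro i j hij
      have := hab.ne; have := hbc.ne; have := hcd.ne; have := hda.ne
      fin_cases i <;> fin_cases j <;> simp_all
    · intro i j
      have := hab.symm; have := hbc.symm; have := hcd.symm; have := hda.symm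
      change G.Adj (![a, b, c, d] i) (![a, b, c, d] j) ↔ _
      have nca : ¬ G.Adj c a := fun h => nac h.symm
      have ndb : ¬ G.Adj d b := fun h => nbd h.symm
      fin_cases i <;> fin_cases j <;> simp_all [cycleGraph_adj] <;> decide
  · refine fun h => ⟨fun f => h (f 0) (f 1) (f 2) (f 3) ?_ ?_ ?_ ?_ ?_ ?_ ?_ ?_⟩ <;>
      simp [f.map_adj_iff, cycleGraph_adj] <;> decide

/-! ### Distance two in the total graph -/

section TotalGraph

variable {V : Type*} (G : SimpleGraph V)

lemma tGraph_adj_inl_inl (v w : V) : (tGraph G).Adj (Sum.inl v) (Sum.inl w) ↔ G.Adj v w := by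
  simp only [tGraph, fromRel_adj, ne_eq, Sum.inl.injEq, G.adj_comm w v, or_self]
  exact ⟨And.right, fun h => ⟨h.ne, h⟩⟩

lemma tGraph_adj_inl_inr (v : V) (e : G.edgeSet) :
    (tGraph G).Adj (Sum.inl v) (Sum.inr e) ↔ v ∈ (e : Sym2 V) := by
  simp [tGraph]

lemma tGraph_adj_inr_inl (v : V) (e : G.edgeSet) :
    (tGraph G).Adj (Sum.inr e) (Sum.inl v) ↔ v ∈ (e : Sym2 V) := by
  simp [tGraph]

lemma lineG_adj (e f : G.edgeSet) :
    (lineG G).Adj e f ↔ e ≠ f ∧ ∃ v, v ∈ (e : Sym2 V) ∧ v ∈ (f : Sym2 V) := by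
  simp only [lineG, fromRel_adj, and_comm (a := _ ∈ (f : Sym2 V)), or_self]

lemma tGraph_adj_inr_inr (e f : G.edgeSet) :
    (tGraph G).Adj (Sum.inr e) (Sum.inr f) ↔ (lineG G).Adj e f := by
  simp only [tGraph, lineG, fromRel_adj, ne_eq, Sum.inr.injEq]

lemma edge_eq_mk {e : G.edgeSet} {u w : V} (hu : u ∈ (e : Sym2 V)) (hw : w ∈ (e : Sym2 V))
    (hne : u ≠ w) : (e : Sym2 V) = s(u, w) :=
  ((Sym2.mem_and_mem_iff hne).1 ⟨hu, hw⟩)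

lemma adj_of_mem_edge {e : G.edgeSet} {u w : V} (hu : u ∈ (e : Sym2 V)) (hw : w ∈ (e : Sym2 V))
    (hne : u ≠ w) : G.Adj u w := by
  rw [← mem_edgeSet, ← edge_eq_mk G hu hw hne]
  exact e.2

lemma exists_other_mem {e : G.edgeSet} {u : V} (hu : u ∈ (e : Sym2 V)) :
    ∃ w ∈ (e : Sym2 V), u ≠ w := by
  obtain ⟨w, hw⟩ := hu
  have : G.Adj u w := by rw [← mem_edgeSet, ← hw]; exact e.2
  exact ⟨w, hw ▸ Sym2.mem_mk_right u w, this.ne⟩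

lemma mem_edge_cases {e : G.edgeSet} {u w x : V} (hu : u ∈ (e : Sym2 V))
    (hw : w ∈ (e : Sym2 V)) (hne : u ≠ w) (hx : x ∈ (e : Sym2 V)) : x = u ∨ x = w := by
  rwa [edge_eq_mk G hu hw hne, Sym2.mem_iff] at hx

lemma edge_ext {e f : G.edgeSet} {u w : V} (hne : u ≠ w) (hu : u ∈ (e : Sym2 V))
    (hw : w ∈ (e : Sym2 V)) (hu' : u ∈ (f : Sym2 V)) (hw' : w ∈ (f : Sym2 V)) : e = f :=
  Subtype.ext ((edge_eq_mk G hu hw hne).trans (edge_eq_mk G hu' hw' hne).symm)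

lemma tGraph_dist_inl_inl (v w : V) :
    (tGraph G).dist (Sum.inl v) (Sum.inl w) = 2 ↔ G.dist v w = 2 := by
  simp only [dist_eq_two_iff_exists, Sum.exists, tGraph_adj_inl_inl, tGraph_adj_inl_inr,
    tGraph_adj_inr_inl, ne_eq, Sum.inl.injEq]
  refine and_congr_right fun hne => and_congr_right fun hna => or_iff_left ?_
  rintro ⟨e, hv, hw⟩
  exact hna (adj_of_mem_edge G hv hw hne)

lemma tGraph_dist_inl_inr (v : V) (e : G.edgeSet) :
    (tGraph G).dist (Sum.inl v) (Sum.inr e) = 2 ↔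
      v ∉ (e : Sym2 V) ∧ ∃ u ∈ (e : Sym2 V), G.Adj v u := by
  simp only [dist_eq_two_iff_exists, Sum.exists, tGraph_adj_inl_inl, tGraph_adj_inl_inr,
    tGraph_adj_inr_inr, lineG_adj, ne_eq, reduceCtorEq, not_false_eq_true, true_and]
  refine and_congr_right fun hv => ⟨?_, fun ⟨u, hu, h⟩ => Or.inl ⟨u, h, hu⟩⟩
  rintro (⟨u, h, hu⟩ | ⟨f, hvf, -, u, huf, hue⟩)
  · exact ⟨u, hu, h⟩
  · exact ⟨u, hue, adj_of_mem_edge G hvf huf (fun h => hv (h ▸ hue))⟩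

lemma tGraph_dist_inr_inl (v : V) (e : G.edgeSet) :
    (tGraph G).dist (Sum.inr e) (Sum.inl v) = 2 ↔
      v ∉ (e : Sym2 V) ∧ ∃ u ∈ (e : Sym2 V), G.Adj v u := by
  rw [dist_comm, tGraph_dist_inl_inr]

lemma tGraph_dist_inr_inr (e f : G.edgeSet) :
    (tGraph G).dist (Sum.inr e) (Sum.inr f) = 2 ↔ (lineG G).dist e f = 2 := by
  simp only [dist_eq_two_iff_exists, Sum.exists, tGraph_adj_inr_inl, tGraph_adj_inl_inr,
    tGraph_adj_inr_inr, ne_eq, Sum.inr.injEq]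
  refine and_congr_right fun hne => and_congr_right fun hna => or_iff_right ?_
  rintro ⟨v, he, hf⟩
  exact hna ((lineG_adj G e f).2 ⟨hne, v, he, hf⟩)

variable [Fintype V]

/-- The edges avoiding `v` that contain a neighbour of `v`. -/
def edgesNear (v : V) : Finset G.edgeSet :=
  Finset.univ.filter fun e => v ∉ (e : Sym2 V) ∧ ∃ u ∈ (e : Sym2 V), G.Adj v u

/-- The vertices off `e` that are adjacent to an endpoint of `e`. -/
def vertsNear (e : G.edgeSet) : Finset V :=
  Finset.univ.filter fun v => v ∉ (e : Sym2 V) ∧ ∃ u ∈ (e : Sym2 V), G.Adj v u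

lemma mem_edgesNear {v : V} {e : G.edgeSet} :
    e ∈ edgesNear G v ↔ v ∉ (e : Sym2 V) ∧ ∃ u ∈ (e : Sym2 V), G.Adj v u := by
  simp [edgesNear]

lemma mem_vertsNear {v : V} {e : G.edgeSet} :
    v ∈ vertsNear G e ↔ v ∉ (e : Sym2 V) ∧ ∃ u ∈ (e : Sym2 V), G.Adj v u := by
  simp [vertsNear]

lemma deg2_tGraph_inl (v : V) :
    deg2 (tGraph G) (Sum.inl v) = deg2 G v + (edgesNear G v).card := by
  simp only [deg2, edgesNear, Finset.card_filter, Fintype.sum_sum_type, tGraph_dist_inl_inl,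
    tGraph_dist_inl_inr]

lemma deg2_tGraph_inr (e : G.edgeSet) :
    deg2 (tGraph G) (Sum.inr e) = (vertsNear G e).card + deg2 (lineG G) e := by
  simp only [deg2, vertsNear, Finset.card_filter, Fintype.sum_sum_type, tGraph_dist_inr_inl,
    tGraph_dist_inr_inr]

/-! ### Comparing the near sets -/

lemma edgesNear_card (v : V) :
    deg2 G v ≤ (edgesNear G v).card ∧ ((edgesNear G v).card = deg2 G v ↔
      (∀ e ∈ edgesNear G v, ∃ w, G.dist v w = 2 ∧ w ∈ (e : Sym2 V)) ∧
      ∀ w, G.dist v w = 2 → ∀ e ∈ edgesNear G v, ∀ e' ∈ edgesNear G v,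
        w ∈ (e : Sym2 V) → w ∈ (e' : Sym2 V) → e = e') := by
  have := card_le_and_eq_iff (Finset.univ.filter fun w => G.dist v w = 2) (edgesNear G v)
    (fun w e => w ∈ (e : Sym2 V)) ?_ ?_
  · simpa only [deg2, Finset.mem_filter, Finset.mem_univ, true_and] using this
  · intro w hw
    obtain ⟨hne, hna, u, hvu, huw⟩ := (dist_eq_two_iff_exists G v w).1 (by simpa using hw)
    refine ⟨⟨s(u, w), huw⟩, (mem_edgesNear G).2 ⟨?_, u, by simp, hvu⟩, by simp⟩
    simp [hvu.ne, hne]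
  · intro e he w hw w' hw' hwe hwe'
    obtain ⟨-, u, hu, hvu⟩ := (mem_edgesNear G).1 he
    have hw := (dist_eq_two_iff_exists G v w).1 (by simpa using hw)
    have hw' := (dist_eq_two_iff_exists G v w').1 (by simpa using hw')
    have h1 : u ≠ w := by rintro rfl; exact hw.2.1 hvu
    rcases mem_edge_cases G hu hwe h1 hwe' with rfl | h
    · exact absurd hvu hw'.2.1
    · exact h.symm

lemma edgesNear_card_eq_iff :
    (∀ v, (edgesNear G v).card = deg2 G v) ↔
      fFree (cycleGraph 3) G ∧ fFree (cycleGraph 4) G := by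
  simp only [fun v => (edgesNear_card G v).2, fFree_three_iff, fFree_four_iff]
  constructor
  · intro h
    constructor
    · intro a b c hab hbc hac
      obtain ⟨w, hw, hwe⟩ := (h a).1 ⟨s(b, c), hbc⟩
        ((mem_edgesNear G).2 ⟨by simp [hab.ne, hac.ne], b, by simp, hab⟩)
      have hna := ((dist_eq_two_iff_exists G a w).1 hw).2.1
      rcases Sym2.mem_iff.1 hwe with rfl | rfl
      exacts [hna hab, hna hac]
    · intro a b c d hab hbc hcd hda hac hbd nac nbd
      have := (h a).2 c ((dist_eq_two_iff_exists G a c).2 ⟨hac, nac, b, hab, hbc⟩)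
        ⟨s(b, c), hbc⟩ ((mem_edgesNear G).2 ⟨by simp [hab.ne, hac], b, by simp, hab⟩)
        ⟨s(d, c), hcd.symm⟩
        ((mem_edgesNear G).2 ⟨by simp [hda.ne.symm, hac], d, by simp, hda.symm⟩)
        (by simp) (by simp)
      exact hbd (Sym2.congr_left.1 (congrArg Subtype.val this))
  · rintro ⟨h3, h4⟩ v
    constructor
    · intro e he
      obtain ⟨hve, u, hu, hvu⟩ := (mem_edgesNear G).1 he
      obtain ⟨w, hw, huw⟩ := exists_other_mem G hu
      have hadj := adj_of_mem_edge G hu hw huw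
      exact ⟨w, (dist_eq_two_iff_exists G v w).2 ⟨fun h => hve (h ▸ hw),
        fun h => h3 v u w hvu hadj h, u, hvu, hadj⟩, hw⟩
    · intro w hw e he e' he' hwe hwe'
      obtain ⟨hne, hna, -⟩ := (dist_eq_two_iff_exists G v w).1 hw
      obtain ⟨-, u, hu, hvu⟩ := (mem_edgesNear G).1 he
      obtain ⟨-, u', hu', hvu'⟩ := (mem_edgesNear G).1 he'
      have huw : u ≠ w := by rintro rfl; exact hna hvu
      have huw' : u' ≠ w := by rintro rfl; exact hna hvu'
      have hadj := adj_of_mem_edge G hu hwe huw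
      have hadj' := adj_of_mem_edge G hu' hwe' huw'
      by_cases huu : u = u'
      · subst huu
        exact edge_ext G huw hu hwe hu' hwe'
      -- Otherwise `v u w u'` is a 4-cycle, induced because `G` has no triangles.
      · exact (h4 v u w u' hvu hadj hadj'.symm hvu'.symm hne huu hna
          fun h => h3 v u u' hvu h hvu').elim

lemma vertsNear_card (e : G.edgeSet) :
    (vertsNear G e).card ≤ deg1 (lineG G) e ∧ (deg1 (lineG G) e = (vertsNear G e).card ↔
      ∀ w ∈ vertsNear G e, ∀ f, (lineG G).Adj e f → ∀ f', (lineG G).Adj e f' →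
        w ∈ (f : Sym2 V) → w ∈ (f' : Sym2 V) → f = f') := by
  have := card_le_and_eq_iff (vertsNear G e) (Finset.univ.filter fun f => (lineG G).Adj e f)
    (fun w f => w ∈ (f : Sym2 V)) ?_ ?_
  · simp only [Finset.mem_filter, Finset.mem_univ, true_and] at this
    refine ⟨this.1, this.2.trans (and_iff_right fun f hf => ?_)⟩
    obtain ⟨hne, u, hue, huf⟩ := (lineG_adj G e f).1 hf
    obtain ⟨w, hw, huw⟩ := exists_other_mem G huf
    exact ⟨w, (mem_vertsNear G).2 ⟨fun hwe => hne (edge_ext G huw hue hwe huf hw), u, hue,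
      (adj_of_mem_edge G huf hw huw).symm⟩, hw⟩
  · intro w hw
    obtain ⟨hwe, u, hu, hwu⟩ := (mem_vertsNear G).1 hw
    refine ⟨⟨s(w, u), hwu⟩, ?_, by simp⟩
    simp only [Finset.mem_filter, Finset.mem_univ, true_and]
    refine (lineG_adj G e _).2 ⟨?_, u, hu, by simp⟩
    rintro rfl
    simp at hwe
  · intro f hf w hw w' hw' hwf hwf'
    simp only [Finset.mem_filter, Finset.mem_univ, true_and] at hf
    obtain ⟨-, u, hue, huf⟩ := (lineG_adj G e f).1 hf
    have hw := ((mem_vertsNear G).1 hw).1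
    have hw' := ((mem_vertsNear G).1 hw').1
    have huw : u ≠ w := by rintro rfl; exact hw hue
    rcases mem_edge_cases G huf hwf huw hwf' with rfl | h
    · exact absurd hue hw'
    · exact h.symm

lemma vertsNear_card_eq_iff :
    (∀ e, deg1 (lineG G) e = (vertsNear G e).card) ↔ fFree (cycleGraph 3) G := by
  simp only [fun e => (vertsNear_card G e).2, fFree_three_iff]
  constructor
  · intro h a b c hab hbc hac
    have hc : c ∉ s(a, b) := by simp [hac.ne.symm, hbc.ne.symm]
    have := h ⟨s(a, b), hab⟩ c ((mem_vertsNear G).2 ⟨hc, a, by simp, hac.symm⟩)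
      ⟨s(a, c), hac⟩ ((lineG_adj G _ _).2 ⟨fun h => hbc.ne (Sym2.congr_right.1 (congrArg Subtype.val h)), a, by simp, by simp⟩)
      ⟨s(b, c), hbc⟩ ((lineG_adj G _ _).2 ⟨fun h => hc ?_, b, by simp, by simp⟩)
      (by simp) (by simp)
    · exact hab.ne (Sym2.congr_left.1 (congrArg Subtype.val this))
    · have h : s(a, b) = s(b, c) := congrArg Subtype.val h
      simp [h]
  · intro h3 e w hw f hf f' hf' hwf hwf'
    have hwe := ((mem_vertsNear G).1 hw).1
    obtain ⟨-, u, hue, huf⟩ := (lineG_adj G e f).1 hf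
    obtain ⟨-, u', hue', huf'⟩ := (lineG_adj G e f').1 hf'
    have huw : u ≠ w := by rintro rfl; exact hwe hue
    have huw' : u' ≠ w := by rintro rfl; exact hwe hue'
    by_cases huu : u = u'
    · subst huu
      exact edge_ext G huw huf hwf huf' hwf'
    -- Otherwise `e = s(u, u')` and `u u' w` is a triangle.
    · exact (h3 u u' w (adj_of_mem_edge G hue hue' huu) (adj_of_mem_edge G huf' hwf' huw')
        (adj_of_mem_edge G huf hwf huw)).elim

end TotalGraph

theorem tGraph_deg2 {V : Type*} [Fintype V] (G : SimpleGraph V)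
    (hconn : G.Connected) :
    (∀ v : V, 2 * deg2 G v ≤ deg2 (tGraph G) (Sum.inl v)) ∧
    ((∀ v : V, deg2 (tGraph G) (Sum.inl v) = 2 * deg2 G v) ↔
      (fFree (SimpleGraph.cycleGraph 3) G ∧ fFree (SimpleGraph.cycleGraph 4) G)) ∧
    (∀ e : G.edgeSet, deg2 (tGraph G) (Sum.inr e) ≤ deg1 (lineG G) e + deg2 (lineG G) e) ∧
    ((∀ e : G.edgeSet, deg2 (tGraph G) (Sum.inr e) = deg1 (lineG G) e + deg2 (lineG G) e) ↔
      fFree (SimpleGraph.cycleGraph 3) G) := by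
  refine ⟨fun v => ?_, ?_, fun e => ?_, ?_⟩
  · rw [deg2_tGraph_inl, two_mul]
    exact Nat.add_le_add_left (edgesNear_card G v).1 _
  · simp only [deg2_tGraph_inl, two_mul, Nat.add_left_cancel_iff]
    exact edgesNear_card_eq_iff G
  · rw [deg2_tGraph_inr]
    exact Nat.add_le_add_right (vertsNear_card G e).1 _
  · simp only [deg2_tGraph_inr, Nat.add_right_cancel_iff, eq_comm (a := (vertsNear G _).card)]
    exact vertsNear_card_eq_iff G
end
end

section
/- Let G and H be disjoint finite simple connected graphs, where G has n ≥ 3 vertices and m edges, H has n₁ vertices and m₁ edges, and G is not isomorphic to the star Sₙ. Then (i) Lξᶜ(G ∨̇ H) ≥ 3(n−1)n + 6|E(L(G))| + (2n₁ + 5m − 2)n₁ − 4m₁, and (ii) Lξᶜ(G ∨̇ H) ≤ 3(n−1)n + 8|E(L(G))| + 2(n₁ + 3m − 1)n₁ − 4m₁. -/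
/-!
Every vertex of `G ∨̇ H` lies within distance 2 of any `w ∈ V(H)`, and the neighbourhoods
`N(v) = {edges at v} ∪ V(H)`, `N(e) = {ends of e}`, `N(w) = V(G) ∪ N_H(w)` determine which pairs
are at distance exactly 2. Consequently

* for `v ∈ V(G)`: `d₂ = n - 1`, and the eccentricity is 3 because some edge of `G` misses `v`;
  otherwise the connected graph `G` would be a star centred at `v` (`star_of_forall_mem`);
* for `e ∈ E(G)`: `d₂ = n₁ + deg_{L(G)} e`, and the eccentricity is 3 or 4, at least 3 because
  `n ≥ 3` provides a vertex outside `e`;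
* for `w ∈ V(H)`: `d₂ = m + n₁ - 1 - deg_H w` and the eccentricity is 2.

Summing with the handshake lemma in `L(G)` and `H` gives both bounds; the only slack is the
eccentricity 3 or 4 at the subdivision vertices.

In lemma names `v`, `e`, `w` stand for a vertex of `G`, a subdivision vertex and a vertex of `H`.
-/

/-!
Definitions for the leap eccentric connectivity index of graph operations with
subdivided edges (Song–Tang).
-/

open SimpleGraph Finset
open scoped Classical

noncomputable section

/-! ### Adjacency in the join -/

theorem svJoin_adj_vv {V W : Type*} (G : SimpleGraph V) (H : SimpleGraph W) (v v' : V) :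
    ¬ (svJoin G H).Adj (.inl (.inl v)) (.inl (.inl v')) := by
  simp [svJoin, subdivG]

theorem svJoin_adj_ve {V W : Type*} (G : SimpleGraph V) (H : SimpleGraph W) (v : V)
    (e : G.edgeSet) :
    (svJoin G H).Adj (.inl (.inl v)) (.inl (.inr e)) ↔ v ∈ (e : Sym2 V) := by
  simp [svJoin, subdivG]

theorem svJoin_adj_ev {V W : Type*} (G : SimpleGraph V) (H : SimpleGraph W) (v : V)
    (e : G.edgeSet) :
    (svJoin G H).Adj (.inl (.inr e)) (.inl (.inl v)) ↔ v ∈ (e : Sym2 V) := by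
  simp [svJoin, subdivG]

theorem svJoin_adj_ee {V W : Type*} (G : SimpleGraph V) (H : SimpleGraph W)
    (e e' : G.edgeSet) :
    ¬ (svJoin G H).Adj (.inl (.inr e)) (.inl (.inr e')) := by
  simp [svJoin, subdivG]

theorem svJoin_adj_vw {V W : Type*} (G : SimpleGraph V) (H : SimpleGraph W) (v : V) (w : W) :
    (svJoin G H).Adj (.inl (.inl v)) (.inr w) := by
  simp [svJoin]

theorem svJoin_adj_wv {V W : Type*} (G : SimpleGraph V) (H : SimpleGraph W) (v : V) (w : W) :
    (svJoin G H).Adj (.inr w) (.inl (.inl v)) := by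
  simp [svJoin]

theorem svJoin_adj_ew {V W : Type*} (G : SimpleGraph V) (H : SimpleGraph W) (e : G.edgeSet)
    (w : W) : ¬ (svJoin G H).Adj (.inl (.inr e)) (.inr w) := by
  simp [svJoin]

theorem svJoin_adj_we {V W : Type*} (G : SimpleGraph V) (H : SimpleGraph W) (e : G.edgeSet)
    (w : W) : ¬ (svJoin G H).Adj (.inr w) (.inl (.inr e)) := by
  simp [svJoin]

theorem svJoin_adj_ww {V W : Type*} (G : SimpleGraph V) (H : SimpleGraph W) (w w' : W) :
    (svJoin G H).Adj (.inr w) (.inr w') ↔ H.Adj w w' := by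
  simp only [svJoin, SimpleGraph.fromRel_adj, ne_eq, Sum.inr.injEq, H.adj_comm w' w, or_self]
  exact ⟨fun h => h.2, fun h => ⟨h.ne, h⟩⟩

/-! ### Distances, degrees and stars in general graphs -/

/-- In a connected graph, distance 2 means distinct, non-adjacent, with a common neighbour. -/
theorem dist_eq_two_iff' {U : Type*} {X : SimpleGraph U} (hX : X.Connected) (a b : U) :
    X.dist a b = 2 ↔ a ≠ b ∧ ¬ X.Adj a b ∧ ∃ c, X.Adj a c ∧ X.Adj c b := by
  constructor
  · intro h
    refine ⟨?_, ?_, ?_⟩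
    · rintro rfl; simp at h
    · intro hab; rw [SimpleGraph.dist_eq_one_iff_adj.2 hab] at h; omega
    · obtain ⟨p, hp⟩ := hX.exists_walk_length_eq_dist a b
      rw [h] at hp
      match p, hp with
      | .cons h1 (.cons h2 .nil), _ => exact ⟨_, h1, h2⟩
  · rintro ⟨hne, hna, c, hac, hcb⟩
    have h1 := hX.dist_triangle (u := a) (v := c) (w := b)
    rw [SimpleGraph.dist_eq_one_iff_adj.2 hac, SimpleGraph.dist_eq_one_iff_adj.2 hcb] at h1
    have h0 := hX.pos_dist_of_ne hne
    have h2 : X.dist a b ≠ 1 := fun h => hna (SimpleGraph.dist_eq_one_iff_adj.1 h)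
    omega

theorem three_le_dist {U : Type*} {X : SimpleGraph U} (hX : X.Connected) {a b : U}
    (hne : a ≠ b) (hna : ¬ X.Adj a b) (hc : ∀ c, X.Adj a c → ¬ X.Adj c b) :
    3 ≤ X.dist a b := by
  have h0 := hX.pos_dist_of_ne hne
  have h2 : X.dist a b ≠ 1 := fun h => hna (SimpleGraph.dist_eq_one_iff_adj.1 h)
  have h3 : X.dist a b ≠ 2 := fun h => by
    obtain ⟨_, _, c, h1, h2⟩ := (dist_eq_two_iff' hX a b).1 h
    exact hc c h1 h2
  omega

/-- The handshake lemma for `deg1` and `numEdges`. -/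
theorem sum_deg1 {U : Type*} [Fintype U] (X : SimpleGraph U) :
    ∑ u, deg1 X u = 2 * numEdges X := by
  have h := X.sum_degrees_eq_twice_card_edges
  rw [numEdges, Set.ncard_eq_toFinset_card']
  rw [SimpleGraph.edgeFinset] at h
  trans ∑ v, X.degree v
  swap
  · convert h
  refine Finset.sum_congr rfl fun u _ => ?_
  rw [deg1, ← SimpleGraph.card_neighborFinset_eq_degree, SimpleGraph.neighborFinset_eq_filter]

theorem dist_le_ecc {U : Type*} [Fintype U] (X : SimpleGraph U) (u x : U) :
    X.dist u x ≤ ecc X u :=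
  Finset.le_sup (f := fun x => X.dist u x) (Finset.mem_univ x)

/-- If every edge of a connected graph contains `v`, the graph is a star centred at `v`. -/
theorem star_of_forall_mem {V : Type*} [Fintype V] (G : SimpleGraph V) (hG : G.Connected)
    (hn : 3 ≤ Fintype.card V) (v : V) (hv : ∀ e ∈ G.edgeSet, v ∈ e) :
    Nonempty (G ≃g completeBipartiteGraph (Fin 1) (Fin (Fintype.card V - 1))) := by
  have : Nontrivial V := Fintype.one_lt_card_iff_nontrivial.1 (by omega)
  -- adjacency in `G` is exactly adjacency in the star with centre `v`
  have key : ∀ a b, G.Adj a b ↔ (a = v ∧ b ≠ v) ∨ (a ≠ v ∧ b = v) := by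
    have hadj : ∀ a b, G.Adj a b → a = v ∨ b = v := fun a b h => by
      simpa [eq_comm] using hv s(a, b) h
    have hcen : ∀ a, a ≠ v → G.Adj a v := fun a ha => by
      obtain ⟨b, hb⟩ := hG.preconnected.exists_adj_of_nontrivial a
      obtain rfl | rfl := hadj a b hb
      · exact absurd rfl ha
      · exact hb
    intro a b
    constructor
    · intro h
      rcases hadj a b h with rfl | rfl
      · exact .inl ⟨rfl, h.ne'⟩
      · exact .inr ⟨h.ne, rfl⟩
    · rintro (⟨rfl, h⟩ | ⟨h, rfl⟩)
      · exact (hcen b h).symm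
      · exact hcen a h
  have hcard : Fintype.card {u // ¬ u = v} = Fintype.card (Fin (Fintype.card V - 1)) := by
    rw [Fintype.card_subtype_compl, Fintype.card_subtype_eq, Fintype.card_fin]
  let φ : V ≃ Fin 1 ⊕ Fin (Fintype.card V - 1) :=
    (Equiv.sumCompl (fun u => u = v)).symm.trans
      (Equiv.sumCongr (Equiv.ofUnique _ _) (Fintype.equivOfCardEq hcard))
  have hL : ∀ a, (φ a).isLeft = true ↔ a = v := fun a => by
    by_cases h : a = v
    · simp [φ, h, Equiv.sumCompl_symm_apply_of_pos]
    · simp [φ, h, Equiv.sumCompl_symm_apply_of_neg]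
  have hR : ∀ a, (φ a).isRight = true ↔ a ≠ v := fun a => by
    rw [ne_eq, ← hL a]; cases φ a <;> simp
  refine ⟨⟨φ, fun {a b} => ?_⟩⟩
  rw [completeBipartiteGraph_adj, key, hL, hL, hR, hR]

/-! ### Distances in the join -/

section Join

variable {V W : Type*} (G : SimpleGraph V) (H : SimpleGraph W)

theorem exists_mem_edge (e : G.edgeSet) : ∃ v, v ∈ (e : Sym2 V) :=
  ⟨_, Sym2.out_fst_mem e.1⟩

theorem svJoin_connected (hG : G.Connected) (hH : H.Connected) : (svJoin G H).Connected := by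
  obtain ⟨w⟩ := hH.nonempty
  rw [SimpleGraph.connected_iff_exists_forall_reachable]
  refine ⟨.inr w, ?_⟩
  have hv : ∀ v, (svJoin G H).Reachable (.inr w) (.inl (.inl v)) :=
    fun v => (svJoin_adj_wv G H v w).reachable
  rintro ((v | e) | w')
  · exact hv v
  · obtain ⟨v, h⟩ := exists_mem_edge G e
    exact (hv v).trans ((svJoin_adj_ve G H v e).2 h).reachable
  · obtain ⟨v⟩ := hG.nonempty
    exact (hv v).trans (svJoin_adj_vw G H v w').reachable

/-- A vertex of `H` has eccentricity at most 2; the upper bounds on the other eccentricities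
follow from this by the triangle inequality through such a vertex. -/
theorem svJoin_dist_w_le (hG : G.Connected) (hH : H.Connected) (w : W) (x) :
    (svJoin G H).dist (.inr w) x ≤ 2 := by
  have hX := svJoin_connected G H hG hH
  have two : ∀ v, (svJoin G H).Adj (.inl (.inl v)) x → (svJoin G H).dist (.inr w) x ≤ 2 := by
    intro v hv
    have h := hX.dist_triangle (u := .inr w) (v := .inl (.inl v)) (w := x)
    rw [SimpleGraph.dist_eq_one_iff_adj.2 hv,
      SimpleGraph.dist_eq_one_iff_adj.2 (svJoin_adj_wv G H v w)] at h
    exact h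
  obtain ⟨v₀⟩ := hG.nonempty
  rcases x with (v | e) | w'
  · rw [SimpleGraph.dist_eq_one_iff_adj.2 (svJoin_adj_wv G H v w)]; omega
  · obtain ⟨v, h⟩ := exists_mem_edge G e
    exact two v ((svJoin_adj_ve G H v e).2 h)
  · exact two v₀ (svJoin_adj_vw G H v₀ w')

theorem svJoin_dist_ew (hG : G.Connected) (hH : H.Connected) (e : G.edgeSet) (w : W) :
    (svJoin G H).dist (.inl (.inr e)) (.inr w) = 2 := by
  obtain ⟨v, h⟩ := exists_mem_edge G e
  exact (dist_eq_two_iff' (svJoin_connected G H hG hH) _ _).2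
    ⟨by simp, svJoin_adj_ew G H _ _, _, (svJoin_adj_ev G H v e).2 h, svJoin_adj_vw ..⟩

theorem svJoin_dist_vv (hG : G.Connected) (hH : H.Connected) (v v' : V) :
    (svJoin G H).dist (.inl (.inl v)) (.inl (.inl v')) = 2 ↔ v ≠ v' := by
  obtain ⟨w⟩ := hH.nonempty
  rw [dist_eq_two_iff' (svJoin_connected G H hG hH)]
  refine ⟨fun h => by simpa using h.1, fun h => ⟨by simpa using h, svJoin_adj_vv G H _ _, _,
    svJoin_adj_vw G H v w, svJoin_adj_wv ..⟩⟩

/-- By the bipartition `V(G)` against `E(G) ∪ V(H)`, broken only inside `H`, a vertex of `G` and a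
subdivision vertex have no common neighbour. -/
theorem svJoin_dist_ve (hG : G.Connected) (hH : H.Connected) (v : V) (e : G.edgeSet) :
    (svJoin G H).dist (.inl (.inl v)) (.inl (.inr e)) ≠ 2 := by
  rw [ne_eq, dist_eq_two_iff' (svJoin_connected G H hG hH)]
  rintro ⟨-, -, ((v' | e') | w'), h, h'⟩
  · exact svJoin_adj_vv _ _ _ _ h
  · exact svJoin_adj_ee _ _ _ _ h'
  · exact svJoin_adj_we _ _ _ _ h'

theorem svJoin_dist_ee (hG : G.Connected) (hH : H.Connected) (e e' : G.edgeSet) :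
    (svJoin G H).dist (.inl (.inr e)) (.inl (.inr e')) = 2 ↔ (lineG G).Adj e e' := by
  rw [dist_eq_two_iff' (svJoin_connected G H hG hH), lineG, SimpleGraph.fromRel_adj]
  constructor
  · rintro ⟨hne, -, ((v' | e') | w'), h, h'⟩
    · exact ⟨by simpa using hne, .inl
        ⟨v', (svJoin_adj_ev ..).1 h, (svJoin_adj_ve ..).1 h'⟩⟩
    · exact absurd h (svJoin_adj_ee G H _ _)
    · exact absurd h (svJoin_adj_ew G H _ _)
  · rintro ⟨hne, h⟩
    obtain ⟨v, h1, h2⟩ : ∃ v, v ∈ (e : Sym2 V) ∧ v ∈ (e' : Sym2 V) := by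
      rcases h with h | ⟨v, h1, h2⟩
      · exact h
      · exact ⟨v, h2, h1⟩
    exact ⟨by simpa using hne, svJoin_adj_ee G H _ _, .inl (.inl v),
      (svJoin_adj_ev ..).2 h1, (svJoin_adj_ve ..).2 h2⟩

theorem svJoin_dist_ww (hG : G.Connected) (hH : H.Connected) (w w' : W) :
    (svJoin G H).dist (.inr w) (.inr w') = 2 ↔ w ≠ w' ∧ ¬ H.Adj w w' := by
  obtain ⟨v⟩ := hG.nonempty
  rw [dist_eq_two_iff' (svJoin_connected G H hG hH), svJoin_adj_ww]
  exact ⟨fun h => ⟨by simpa using h.1, h.2.1⟩, fun h => ⟨by simpa using h.1, h.2, _,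
    svJoin_adj_wv G H v w, svJoin_adj_vw ..⟩⟩

/-! ### Eccentricities and second degrees in the join -/

variable [Fintype V] [Fintype W]

theorem exists_incident (hG : G.Connected) (hn : 3 ≤ Fintype.card V) (v : V) :
    ∃ e : G.edgeSet, v ∈ (e : Sym2 V) := by
  have : Nontrivial V := Fintype.one_lt_card_iff_nontrivial.1 (by omega)
  obtain ⟨b, hb⟩ := hG.preconnected.exists_adj_of_nontrivial v
  exact ⟨⟨s(v, b), hb⟩, by simp⟩

/-- An edge missing `v` is at distance 3 from `v`: they are not adjacent, and no vertex is adjacent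
to both. -/
theorem ecc_v (hG : G.Connected) (hH : H.Connected) (v : V)
    (hv : ∃ e : G.edgeSet, v ∉ (e : Sym2 V)) :
    ecc (svJoin G H) (.inl (.inl v)) = 3 := by
  have hX := svJoin_connected G H hG hH
  refine le_antisymm (Finset.sup_le fun x _ => ?_) ?_
  · obtain ⟨w⟩ := hH.nonempty
    have h := hX.dist_triangle (u := .inl (.inl v)) (v := .inr w) (w := x)
    rw [SimpleGraph.dist_eq_one_iff_adj.2 (svJoin_adj_vw G H v w)] at h
    have := svJoin_dist_w_le G H hG hH w x
    omega
  · obtain ⟨e, he⟩ := hv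
    refine le_trans (three_le_dist hX (by simp) ?_ ?_) (dist_le_ecc _ _ (.inl (.inr e)))
    · rwa [svJoin_adj_ve]
    · rintro ((v' | e') | w') h
      · exact absurd h (svJoin_adj_vv G H _ _)
      · exact svJoin_adj_ee G H _ _
      · exact svJoin_adj_we G H _ _

/-- The distance 3 is attained at any vertex of `G` outside `e`; one exists as `G` has at least
three vertices. -/
theorem ecc_e (hG : G.Connected) (hH : H.Connected) (hn : 3 ≤ Fintype.card V) (e : G.edgeSet) :
    3 ≤ ecc (svJoin G H) (.inl (.inr e)) ∧ ecc (svJoin G H) (.inl (.inr e)) ≤ 4 := by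
  have hX := svJoin_connected G H hG hH
  constructor
  · obtain ⟨v, hv⟩ : ∃ v, v ∉ (e : Sym2 V) := by
      by_contra! hall
      have h1 : (Finset.univ : Finset V) ⊆ (e : Sym2 V).toFinset := fun v _ => by
        simpa using hall v
      have h2 := Finset.card_le_card h1
      have h3 := Sym2.card_toFinset (e : Sym2 V)
      rw [Finset.card_univ] at h2
      split_ifs at h3 <;> omega
    refine le_trans (three_le_dist hX (by simp) ?_ ?_) (dist_le_ecc _ _ (.inl (.inl v)))
    · rwa [svJoin_adj_ev]
    · rintro ((v' | e') | w') h
      · exact svJoin_adj_vv G H _ _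
      · exact absurd h (svJoin_adj_ee G H _ _)
      · exact absurd h (svJoin_adj_ew G H _ _)
  · refine Finset.sup_le fun x _ => ?_
    obtain ⟨w⟩ := hH.nonempty
    have h := hX.dist_triangle (u := .inl (.inr e)) (v := .inr w) (w := x)
    have h1 := svJoin_dist_w_le G H hG hH w x
    have h2 := svJoin_dist_w_le G H hG hH w (.inl (.inr e))
    rw [SimpleGraph.dist_comm] at h2
    omega

theorem ecc_w (hG : G.Connected) (hH : H.Connected) (hn : 3 ≤ Fintype.card V) (w : W) :
    ecc (svJoin G H) (.inr w) = 2 := by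
  refine le_antisymm (Finset.sup_le fun x _ => svJoin_dist_w_le G H hG hH w x) ?_
  obtain ⟨v⟩ := hG.nonempty
  obtain ⟨e, -⟩ := exists_incident G hG hn v
  rw [← svJoin_dist_ew G H hG hH e w, SimpleGraph.dist_comm]
  exact dist_le_ecc ..

theorem deg2_v (hG : G.Connected) (hH : H.Connected) (v : V) :
    deg2 (svJoin G H) (.inl (.inl v)) + 1 = Fintype.card V := by
  have hw : ∀ w, (svJoin G H).dist (.inl (.inl v)) (.inr w) ≠ 2 := fun w => by
    rw [SimpleGraph.dist_eq_one_iff_adj.2 (svJoin_adj_vw G H v w)]; omega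
  rw [deg2, Finset.card_filter, Fintype.sum_sum_type, Fintype.sum_sum_type]
  simp only [svJoin_dist_vv G H hG hH, svJoin_dist_ve G H hG hH, hw, if_false,
    Finset.sum_const_zero, add_zero]
  rw [← Finset.card_filter, Finset.filter_ne, Finset.card_erase_add_one (Finset.mem_univ v),
    Finset.card_univ]

theorem deg2_e (hG : G.Connected) (hH : H.Connected) (e : G.edgeSet) :
    deg2 (svJoin G H) (.inl (.inr e)) = deg1 (lineG G) e + Fintype.card W := by
  rw [deg2, Finset.card_filter, Fintype.sum_sum_type, Fintype.sum_sum_type]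
  have hv : ∀ v, (svJoin G H).dist (.inl (.inr e)) (.inl (.inl v)) ≠ 2 := fun v => by
    rw [SimpleGraph.dist_comm]; exact svJoin_dist_ve G H hG hH v e
  simp only [svJoin_dist_ee G H hG hH, svJoin_dist_ew G H hG hH, hv, if_false, if_true,
    Finset.sum_const_zero, zero_add]
  rw [deg1, Finset.card_filter]
  simp

theorem deg2_w (hG : G.Connected) (hH : H.Connected) (w : W) :
    deg2 (svJoin G H) (.inr w) + 1 + deg1 H w = numEdges G + Fintype.card W := by
  rw [deg2, Finset.card_filter, Fintype.sum_sum_type, Fintype.sum_sum_type]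
  have hv : ∀ v, (svJoin G H).dist (.inr w) (.inl (.inl v)) ≠ 2 := fun v => by
    rw [SimpleGraph.dist_eq_one_iff_adj.2 (svJoin_adj_wv G H v w)]; omega
  have he : ∀ e, (svJoin G H).dist (.inr w) (.inl (.inr e)) = 2 := fun e => by
    rw [SimpleGraph.dist_comm]; exact svJoin_dist_ew G H hG hH e w
  simp only [svJoin_dist_ww G H hG hH, he, hv, if_false, if_true,
    Finset.sum_const_zero, zero_add]
  have hm : ∑ _e : G.edgeSet, 1 = numEdges G := by
    rw [numEdges, Finset.sum_const, smul_eq_mul, mul_one, Finset.card_univ,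
      ← Nat.card_eq_fintype_card, Nat.card_coe_set_eq]
  -- the vertices of `H` split into `w`, its neighbours and its non-neighbours
  have hW : (∑ x, if w ≠ x ∧ ¬ H.Adj w x then 1 else 0) + 1 + deg1 H w = Fintype.card W := by
    rw [deg1, Finset.card_filter]
    have h1 : (1 : ℕ) = ∑ x, if w = x then 1 else 0 := by simp
    rw [h1, ← Finset.sum_add_distrib, ← Finset.sum_add_distrib, Fintype.card_eq_sum_ones]
    refine Finset.sum_congr rfl fun x _ => ?_
    by_cases hx : w = x
    · subst hx; simp
    · by_cases ha : H.Adj w x <;> simp [hx, ha]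
  omega

end Join

/-! ### Summation -/
theorem svJoin_leapECI_nonstar {V W : Type*} [Fintype V] [Fintype W]
    (G : SimpleGraph V) (H : SimpleGraph W)
    (hGconn : G.Connected) (hHconn : H.Connected)
    (n m n₁ m₁ : ℕ) (hn : n = Fintype.card V) (hm : m = numEdges G)
    (hn₁ : n₁ = Fintype.card W) (hm₁ : m₁ = numEdges H) (hn3 : 3 ≤ n)
    (hstar : ¬ Nonempty (G ≃g completeBipartiteGraph (Fin 1) (Fin (n - 1)))) :
    3 * ((n : ℤ) - 1) * (n : ℤ) + 6 * (numEdges (lineG G) : ℤ) +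
        (2 * (n₁ : ℤ) + 5 * (m : ℤ) - 2) * (n₁ : ℤ) - 4 * (m₁ : ℤ) ≤
      (leapECI (svJoin G H) : ℤ) ∧
    (leapECI (svJoin G H) : ℤ) ≤
      3 * ((n : ℤ) - 1) * (n : ℤ) + 8 * (numEdges (lineG G) : ℤ) +
        2 * ((n₁ : ℤ) + 3 * (m : ℤ) - 1) * (n₁ : ℤ) - 4 * (m₁ : ℤ) := by
  subst hn hm hn₁ hm₁
  have hnon : ∀ v : V, ∃ e : G.edgeSet, v ∉ (e : Sym2 V) := fun v => by
    by_contra! h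
    exact hstar (star_of_forall_mem G hGconn hn3 v fun e he => h ⟨e, he⟩)
  have hEcard : Fintype.card G.edgeSet = numEdges G := by
    rw [numEdges, ← Nat.card_eq_fintype_card, Nat.card_coe_set_eq]
  have hV : (∑ v : V, (deg2 (svJoin G H) (.inl (.inl v)) *
      ecc (svJoin G H) (.inl (.inl v)) : ℤ)) =
      3 * ((Fintype.card V : ℤ) - 1) * (Fintype.card V : ℤ) := by
    have h : ∀ v : V, (deg2 (svJoin G H) (.inl (.inl v)) *
        ecc (svJoin G H) (.inl (.inl v)) : ℤ) = ((Fintype.card V : ℤ) - 1) * 3 := fun v => by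
      rw [ecc_v G H hGconn hHconn v (hnon v), ← deg2_v G H hGconn hHconn v]
      push_cast; ring
    rw [Finset.sum_congr rfl fun v _ => h v, Finset.sum_const, Finset.card_univ, nsmul_eq_mul]
    ring
  have hW : (∑ w : W, (deg2 (svJoin G H) (.inr w) * ecc (svJoin G H) (.inr w) : ℤ)) =
      2 * ((numEdges G : ℤ) + Fintype.card W - 1) * Fintype.card W - 4 * numEdges H := by
    have h : ∀ w : W, (deg2 (svJoin G H) (.inr w) * ecc (svJoin G H) (.inr w) : ℤ) =
        2 * ((numEdges G : ℤ) + Fintype.card W - 1) - 2 * deg1 H w := fun w => by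
      have h2 := deg2_w G H hGconn hHconn w
      rw [ecc_w G H hGconn hHconn hn3 w]
      push_cast
      omega
    have hs : (∑ w, (deg1 H w : ℤ)) = 2 * numEdges H := by exact_mod_cast sum_deg1 H
    rw [Finset.sum_congr rfl fun w _ => h w, Finset.sum_sub_distrib, Finset.sum_const,
      ← Finset.mul_sum, hs, Finset.card_univ, nsmul_eq_mul]
    ring
  have hE2 : (∑ e : G.edgeSet, (deg2 (svJoin G H) (.inl (.inr e)) : ℤ)) =
      2 * numEdges (lineG G) + numEdges G * Fintype.card W := by
    have hs : (∑ e, (deg1 (lineG G) e : ℤ)) = 2 * numEdges (lineG G) := by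
      exact_mod_cast sum_deg1 (lineG G)
    simp only [deg2_e G H hGconn hHconn, Nat.cast_add]
    rw [Finset.sum_add_distrib, hs, Finset.sum_const, Finset.card_univ, nsmul_eq_mul, hEcard]
  have hEl : 3 * (∑ e : G.edgeSet, (deg2 (svJoin G H) (.inl (.inr e)) : ℤ)) ≤
      ∑ e : G.edgeSet, (deg2 (svJoin G H) (.inl (.inr e)) *
        ecc (svJoin G H) (.inl (.inr e)) : ℤ) := by
    rw [Finset.mul_sum]
    refine Finset.sum_le_sum fun e _ => ?_
    rw [mul_comm]
    exact_mod_cast Nat.mul_le_mul_left _ (ecc_e G H hGconn hHconn hn3 e).1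
  have hEu : ∑ e : G.edgeSet, (deg2 (svJoin G H) (.inl (.inr e)) *
        ecc (svJoin G H) (.inl (.inr e)) : ℤ) ≤
      4 * (∑ e : G.edgeSet, (deg2 (svJoin G H) (.inl (.inr e)) : ℤ)) := by
    rw [Finset.mul_sum]
    refine Finset.sum_le_sum fun e _ => ?_
    rw [mul_comm 4]
    exact_mod_cast Nat.mul_le_mul_left _ (ecc_e G H hGconn hHconn hn3 e).2
  rw [hE2] at hEl hEu
  rw [leapECI, Fintype.sum_sum_type, Fintype.sum_sum_type]
  push_cast
  rw [hV, hW]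
  constructor <;> linarith
end
end
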